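/- Let F be a division ring and let I ⊆ F[z] be a nonzero right ideal (an additive subgroup of F[z] containing 0 and closed under right multiplication by arbitrary elements of F[z]). Then there exist n ∈ ℕ and a controllable pair (A, v) with A ∈ F^{n×n}, v ∈ F^{n×1}, such that I = {f ∈ F[z] : (vf)^ℓ(A) = 0}. Moreover, two controllable pairs (A, v) and (A′, v′) with A, A′ ∈ F^{n×n} satisfy {f : (vf)^ℓ(A) = 0} = {f : (v′f)^ℓ(A′) = 0} if and only if there is an invertible T ∈ F^{n×n} with A′ = T A T^{−1} and v′ = T v. -/

import Mathlib

/-!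
Left evaluation `f ↦ ev f := ∑ⱼ Aʲ v fⱼ` is additive, is right `F`-linear in the coefficients and
turns left multiplication by `X` into left multiplication by `A`. Hence its kernel is a right ideal
(`leftEval_mul_eq_zero`). On polynomials of degree `< n` it is the multiplication of the
coefficient column by the controllability matrix, so for a controllable pair it restricts to a
bijection from these polynomials onto `F^{n×1}` (`leftEval_eq_ctrbMat_mul`,
`leftEval_colPoly`).

Existence: a nonzero right ideal contains a monic `p` of minimal degree `n`, and division with remainder
`f = r + p q` shows that `f ∈ I` iff `r = 0`. For the companion matrix of `p` and `e₁` the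
controllability matrix is the identity and `p` evaluates to `0`, so `ev f = ev r`, which vanishes iff
`r = 0`.

Uniqueness: put `T := 𝔠' 𝔠⁻¹`, with `𝔠`, `𝔠'` the two controllability matrices. Then
`T (ev f) = ev' f` when `deg f < n`, and for all `f` because the kernels agree
and every polynomial is congruent modulo the kernel to one of degree `< n`. Taking `f = 1` gives
`T v = v'`, and taking `f = X^(j+1)` for `j < n` gives `T A 𝔠 = A' 𝔠' = A' T 𝔠`.
-/

open Polynomial Matrix Finset

section Defs

variable {F : Type*} [DivisionRing F]

/-- The scalar `c` regarded as a `1 × 1` matrix. -/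
noncomputable def oneByOne (c : F) : Matrix (Fin 1) (Fin 1) F := Matrix.of fun _ _ => c

/-- Left evaluation `(v f)^{𝔢ℓ}(A) := ∑ⱼ Aʲ v fⱼ` of `f ∈ F[z]` at an input pair `(A, v)`. -/
noncomputable def leftEval {m : Type*} [Fintype m] [DecidableEq m]
    (A : Matrix m m F) (v : Matrix m (Fin 1) F) (f : F[X]) : Matrix m (Fin 1) F :=
  ∑ j ∈ Finset.range (f.natDegree + 1), A ^ j * v * oneByOne (f.coeff j)

/-- Right evaluation `(f u)^{𝔢r}(A) := ∑ⱼ fⱼ u Aʲ` of `f ∈ F[z]` at an output pair `(u, A)`. -/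
noncomputable def rightEval {m : Type*} [Fintype m] [DecidableEq m]
    (u : Matrix (Fin 1) m F) (A : Matrix m m F) (f : F[X]) : Matrix (Fin 1) m F :=
  ∑ j ∈ Finset.range (f.natDegree + 1), oneByOne (f.coeff j) * u * A ^ j

/-- Controllability matrix `[v, Av, …, A^{n-1} v]`. -/
noncomputable def ctrbMat {n : ℕ} (A : Matrix (Fin n) (Fin n) F)
    (v : Matrix (Fin n) (Fin 1) F) : Matrix (Fin n) (Fin n) F :=
  Matrix.of fun i j => (A ^ (j : ℕ) * v) i 0

/-- Observability matrix with rows `u, uA, …, u A^{n-1}`. -/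
noncomputable def obsMat {n : ℕ} (u : Matrix (Fin 1) (Fin n) F)
    (A : Matrix (Fin n) (Fin n) F) : Matrix (Fin n) (Fin n) F :=
  Matrix.of fun i j => (u * A ^ (i : ℕ)) 0 j

/-- Left companion matrix of a (monic, degree `n`) polynomial: its columns are
`e₂, …, eₙ, -(p₀, …, p_{n-1})ᵀ`. -/
noncomputable def Cl (n : ℕ) (p : F[X]) : Matrix (Fin n) (Fin n) F :=
  Matrix.of fun i j =>
    if (j : ℕ) = n - 1 then -(p.coeff (i : ℕ)) else if (i : ℕ) = (j : ℕ) + 1 then 1 else 0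

/-- Right companion matrix: the transpose of the left one. -/
noncomputable def Cr (n : ℕ) (p : F[X]) : Matrix (Fin n) (Fin n) F := (Cl n p)ᵀ

/-- First standard basis column vector of `F^{n×1}`. -/
noncomputable def e1 (F : Type*) [DivisionRing F] (n : ℕ) : Matrix (Fin n) (Fin 1) F :=
  Matrix.of fun i _ => if (i : ℕ) = 0 then 1 else 0

/-- First standard basis row vector of `F^{1×n}`. -/
noncomputable def e1row (F : Type*) [DivisionRing F] (n : ℕ) : Matrix (Fin 1) (Fin n) F :=
  Matrix.of fun _ j => if (j : ℕ) = 0 then 1 else 0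

/-- Two-sided evaluation `(v f u)^{𝔢ts}(A,B) := ∑_{i+j+1 ≤ deg f} Aⁱ v f_{i+j+1} u Bʲ`. -/
noncomputable def tsEval {n k : ℕ} (A : Matrix (Fin n) (Fin n) F) (B : Matrix (Fin k) (Fin k) F)
    (v : Matrix (Fin n) (Fin 1) F) (u : Matrix (Fin 1) (Fin k) F) (f : F[X]) :
    Matrix (Fin n) (Fin k) F :=
  ∑ i ∈ Finset.range f.natDegree, ∑ j ∈ Finset.range f.natDegree,
    A ^ i * v * oneByOne (f.coeff (i + j + 1)) * u * B ^ j

end Defs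

section Helpers

variable {F : Type*} [DivisionRing F]

lemma oneByOne_add (a b : F) : oneByOne (a + b) = oneByOne a + oneByOne b := by
  ext; simp [oneByOne]

lemma oneByOne_zero : oneByOne (0 : F) = 0 := by
  ext; simp [oneByOne]

lemma oneByOne_one : oneByOne (1 : F) = 1 := by
  ext i j
  rw [Subsingleton.elim i j]
  simp [oneByOne]

lemma oneByOne_mul (a b : F) : oneByOne (a * b) = oneByOne a * oneByOne b := by
  ext i j; simp [oneByOne, Matrix.mul_apply]

lemma mul_oneByOne_apply {m : Type*} (w : Matrix m (Fin 1) F) (c : F) (i : m) (k : Fin 1) :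
    (w * oneByOne c) i k = w i 0 * c := by
  simp [oneByOne, Matrix.mul_apply]

section Eval

variable {m : Type*} [Fintype m] [DecidableEq m]

lemma leftEval_eq_sum (A : Matrix m m F) (v : Matrix m (Fin 1) F) (f : F[X]) :
    leftEval A v f = f.sum fun j c => A ^ j * v * oneByOne c := by
  rw [leftEval, Polynomial.sum_over_range]
  intro j
  rw [oneByOne_zero, Matrix.mul_zero]

lemma leftEval_add (A : Matrix m m F) (v : Matrix m (Fin 1) F) (f g : F[X]) :
    leftEval A v (f + g) = leftEval A v f + leftEval A v g := by
  simp only [leftEval_eq_sum]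
  apply Polynomial.sum_add_index
  · intro j
    rw [oneByOne_zero, Matrix.mul_zero]
  · intro j a b
    rw [oneByOne_add, Matrix.mul_add]

/-- Left evaluation at a fixed pair, as an additive homomorphism. -/
noncomputable def leftEvalHom (A : Matrix m m F) (v : Matrix m (Fin 1) F) :
    F[X] →+ Matrix m (Fin 1) F :=
  AddMonoidHom.mk' (leftEval A v) (leftEval_add A v)

lemma leftEvalHom_apply (A : Matrix m m F) (v : Matrix m (Fin 1) F) (f : F[X]) :
    leftEvalHom A v f = leftEval A v f := rfl

lemma leftEval_monomial (A : Matrix m m F) (v : Matrix m (Fin 1) F) (j : ℕ) (c : F) :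
    leftEval A v (monomial j c) = A ^ j * v * oneByOne c := by
  rw [leftEval_eq_sum, Polynomial.sum_monomial_index]
  rw [oneByOne_zero, Matrix.mul_zero]

lemma leftEval_X_pow (A : Matrix m m F) (v : Matrix m (Fin 1) F) (j : ℕ) :
    leftEval A v (X ^ j) = A ^ j * v := by
  rw [← monomial_one_right_eq_X_pow, leftEval_monomial, oneByOne_one, Matrix.mul_one]

lemma leftEval_mul_monomial (A : Matrix m m F) (v : Matrix m (Fin 1) F) (f : F[X])
    (k : ℕ) (c : F) :
    leftEval A v (f * monomial k c) = A ^ k * leftEval A v f * oneByOne c := by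
  induction f using Polynomial.induction_on' with
  | add p q hp hq =>
    rw [add_mul, leftEval_add, leftEval_add, hp, hq, Matrix.mul_add, Matrix.add_mul]
  | monomial j a =>
    rw [monomial_mul_monomial, leftEval_monomial, leftEval_monomial, oneByOne_mul, add_comm,
      pow_add]
    simp only [Matrix.mul_assoc]

lemma leftEval_mul_eq_zero (A : Matrix m m F) (v : Matrix m (Fin 1) F) {f : F[X]}
    (hf : leftEval A v f = 0) (g : F[X]) : leftEval A v (f * g) = 0 := by
  induction g using Polynomial.induction_on' with
  | add p q hp hq => rw [mul_add, leftEval_add, hp, hq, add_zero]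
  | monomial k c => rw [leftEval_mul_monomial, hf, Matrix.mul_zero, Matrix.zero_mul]

end Eval

/-- The polynomial `∑_{i < n} cᵢ zⁱ` with coefficient column `c`. -/
noncomputable def colPoly {n : ℕ} (c : Matrix (Fin n) (Fin 1) F) : F[X] :=
  ∑ i : Fin n, monomial (i : ℕ) (c i 0)

lemma leftEval_colPoly {n : ℕ} (A : Matrix (Fin n) (Fin n) F) (v : Matrix (Fin n) (Fin 1) F)
    (c : Matrix (Fin n) (Fin 1) F) : leftEval A v (colPoly c) = ctrbMat A v * c := by
  rw [colPoly, ← leftEvalHom_apply, map_sum]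
  ext i k
  obtain rfl := Subsingleton.elim k 0
  simp only [leftEvalHom_apply, leftEval_monomial, Matrix.sum_apply, mul_oneByOne_apply]
  rfl

lemma leftEval_eq_ctrbMat_mul {n : ℕ} (A : Matrix (Fin n) (Fin n) F)
    (v : Matrix (Fin n) (Fin 1) F) {f : F[X]} (hf : f.degree < n) :
    leftEval A v f = ctrbMat A v * (Matrix.of fun i _ => f.coeff i : Matrix (Fin n) (Fin 1) F) := by
  rw [← leftEval_colPoly]
  congr 1
  simp only [colPoly, Matrix.of_apply]
  exact ((Polynomial.sum_fin (fun i c => monomial i c) (by simp) hf).trans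
    (Polynomial.sum_monomial_eq f)).symm

/-- The companion matrix shifts the standard basis: `Aʲ e₁ = e_{j+1}` for `j < n`. -/
lemma Cl_pow_mul_e1 (n : ℕ) (p : F[X]) (j : ℕ) (hj : j < n) :
    Cl n p ^ j * e1 F n = Matrix.of fun (i : Fin n) _ => if (i : ℕ) = j then 1 else 0 := by
  induction j with
  | zero => simp [e1]
  | succ j ih =>
    rw [pow_succ', Matrix.mul_assoc, ih (by omega)]
    ext i k
    rw [Matrix.mul_apply, Finset.sum_eq_single (⟨j, by omega⟩ : Fin n)]
    · have : j ≠ n - 1 := by omega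
      simp [Cl, this]
    · intro b _ hb
      have : (b : ℕ) ≠ j := fun h => hb (Fin.ext h)
      simp [this]
    · simp

lemma ctrbMat_Cl (n : ℕ) (p : F[X]) : ctrbMat (Cl n p) (e1 F n) = 1 := by
  ext i j
  rw [ctrbMat, Matrix.of_apply, Cl_pow_mul_e1 n p j j.2]
  simp [Matrix.one_apply, Fin.ext_iff]

/-- A monic polynomial annihilates its companion pair. -/
lemma leftEval_Cl_self (n : ℕ) (p : F[X]) (hp : p.Monic) (hn : p.natDegree = n) :
    leftEval (Cl n p) (e1 F n) p = 0 := by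
  rcases Nat.eq_zero_or_pos n with rfl | hpos
  · ext i
    exact i.elim0
  ext i k
  obtain ⟨d, rfl⟩ : ∃ d, n = d + 1 := ⟨n - 1, by omega⟩
  -- the leading term is minus the last column of the companion matrix
  have hlast : (Cl (d + 1) p ^ (d + 1) * e1 F (d + 1)) i 0 = -(p.coeff i) := by
    rw [pow_succ', Matrix.mul_assoc, Cl_pow_mul_e1 _ p d (by omega), Matrix.mul_apply,
      Finset.sum_eq_single (Fin.last d)]
    · simp [Cl]
    · intro b _ hb
      have : (b : ℕ) ≠ d := fun h => hb (Fin.ext h)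
      simp [this]
    · simp
  have hlead : p.coeff (d + 1) = 1 := hn ▸ hp.coeff_natDegree
  rw [leftEval, hn, Finset.sum_range_succ, Matrix.add_apply, mul_oneByOne_apply, hlast,
    Matrix.sum_apply, hlead, mul_one, Finset.sum_eq_single (i : ℕ)]
  · rw [mul_oneByOne_apply, Cl_pow_mul_e1 _ p i i.2]
    simp
  · intro b hb hbi
    rw [mul_oneByOne_apply, Cl_pow_mul_e1 _ p b (Finset.mem_range.1 hb)]
    simp [Ne.symm hbi]
  · intro h
    exact absurd (Finset.mem_range.2 i.2) h

/-- Similar pairs have intertwined evaluations. -/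
lemma leftEval_conj {n : ℕ} (A T T' : Matrix (Fin n) (Fin n) F) (v : Matrix (Fin n) (Fin 1) F)
    (hT : T' * T = 1) (hT' : T * T' = 1) (f : F[X]) :
    leftEval (T * A * T') (T * v) f = T * leftEval A v f := by
  have hpow (j : ℕ) : (T * A * T') ^ j = T * A ^ j * T' :=
    Units.conj_pow (⟨T, T', hT', hT⟩ : (Matrix (Fin n) (Fin n) F)ˣ) A j
  rw [leftEval, leftEval, Matrix.mul_sum]
  refine Finset.sum_congr rfl fun j _ => ?_
  rw [hpow, Matrix.mul_assoc (T * A ^ j), ← Matrix.mul_assoc T' T, hT, Matrix.one_mul]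
  simp only [Matrix.mul_assoc]

lemma exists_controllable_pair (I : Set F[X])
    (hadd : ∀ f ∈ I, ∀ g ∈ I, f + g ∈ I)
    (hneg : ∀ f ∈ I, -f ∈ I)
    (hmulr : ∀ f ∈ I, ∀ g : F[X], f * g ∈ I)
    (hne : ∃ f ∈ I, f ≠ 0) :
    ∃ (n : ℕ) (A : Matrix (Fin n) (Fin n) F) (v : Matrix (Fin n) (Fin 1) F),
      IsUnit (ctrbMat A v) ∧ I = {f : F[X] | leftEval A v f = 0} := by
  obtain ⟨p, hpI, hp, hmin⟩ : ∃ p ∈ I, p.Monic ∧ ∀ g ∈ I, g.degree < p.degree → g = 0 := by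
    obtain ⟨f, ⟨hfI, hf0⟩, hmin⟩ := WellFounded.has_min
      (InvImage.wf (Polynomial.degree (R := F)) wellFounded_lt) {f | f ∈ I ∧ f ≠ 0} hne
    refine ⟨f * C f.leadingCoeff⁻¹, hmulr f hfI _, monic_mul_leadingCoeff_inv hf0, ?_⟩
    intro g hg hlt
    rw [degree_mul_leadingCoeff_inv f hf0] at hlt
    by_contra hg0
    exact hmin g ⟨hg, hg0⟩ hlt
  refine ⟨p.natDegree, Cl p.natDegree p, e1 F p.natDegree, ?_, ?_⟩
  · rw [ctrbMat_Cl]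
    exact isUnit_one
  ext f
  have hdeg := degree_modByMonic_lt f hp
  have hdiv := modByMonic_add_div f p
  have hq := hmulr p hpI (f /ₘ p)
  have hev : leftEval (Cl p.natDegree p) (e1 F p.natDegree) f
      = leftEval (Cl p.natDegree p) (e1 F p.natDegree) (f %ₘ p) := by
    conv_lhs => rw [← hdiv]
    rw [leftEval_add, leftEval_mul_eq_zero _ _ (leftEval_Cl_self _ p hp rfl), add_zero]
  rw [Set.mem_ofPred_eq, hev]
  constructor
  · intro hf
    have hr : f %ₘ p ∈ I := by
      rw [eq_sub_of_add_eq hdiv, sub_eq_add_neg]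
      exact hadd _ hf _ (hneg _ hq)
    rw [hmin _ hr hdeg]
    simp [leftEval, oneByOne_zero]
  · intro h0
    rw [degree_eq_natDegree hp.ne_zero] at hdeg
    rw [leftEval_eq_ctrbMat_mul _ _ hdeg, ctrbMat_Cl, Matrix.one_mul] at h0
    have hr : f %ₘ p = 0 := by
      ext k
      rcases lt_or_ge k p.natDegree with hk | hk
      · exact congrFun (congrFun h0 ⟨k, hk⟩) 0
      · exact coeff_eq_zero_of_degree_lt (hdeg.trans_le (by exact_mod_cast hk))
    rw [← hdiv, hr, zero_add]
    exact hq

lemma similar_of_ker_eq {n : ℕ} {A A' : Matrix (Fin n) (Fin n) F} {v v' : Matrix (Fin n) (Fin 1) F}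
    (hc : IsUnit (ctrbMat A v)) (hc' : IsUnit (ctrbMat A' v'))
    (hker : {f : F[X] | leftEval A v f = 0} = {f : F[X] | leftEval A' v' f = 0}) :
    ∃ T T' : Matrix (Fin n) (Fin n) F,
      T * T' = 1 ∧ T' * T = 1 ∧ A' = T * A * T' ∧ v' = T * v := by
  obtain ⟨U, hU⟩ := hc
  obtain ⟨U', hU'⟩ := hc'
  set W := U' * U⁻¹ with hW
  -- `T` intertwines the evaluations: reduce `f` to the polynomial with coefficients `𝔠⁻¹ (ev f)`
  have key (f : F[X]) : leftEval A' v' f = (W : Matrix (Fin n) (Fin n) F) * leftEval A v f := by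
    set c := (↑U⁻¹ : Matrix (Fin n) (Fin n) F) * leftEval A v f with hcdef
    have h1 : leftEval A v (colPoly c) = leftEval A v f := by
      rw [leftEval_colPoly, hcdef, ← hU, ← Matrix.mul_assoc, U.mul_inv, Matrix.one_mul]
    have h2 : f - colPoly c ∈ {f : F[X] | leftEval A v f = 0} := by
      rw [Set.mem_ofPred_eq, ← leftEvalHom_apply, map_sub, leftEvalHom_apply, leftEvalHom_apply,
        h1, sub_self]
    rw [hker, Set.mem_ofPred_eq, ← leftEvalHom_apply, map_sub, sub_eq_zero, leftEvalHom_apply,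
      leftEvalHom_apply, leftEval_colPoly] at h2
    rw [h2, hcdef, ← hU', hW, Units.val_mul, Matrix.mul_assoc]
  have hTA : (W : Matrix (Fin n) (Fin n) F) * A * U = A' * U' := by
    rw [hU, hU']
    ext i j
    have hj := congrFun (congrFun (key (X ^ ((j : ℕ) + 1))) i) 0
    rw [leftEval_X_pow, leftEval_X_pow, pow_succ', pow_succ', Matrix.mul_assoc, Matrix.mul_assoc,
      ← Matrix.mul_assoc (W : Matrix (Fin n) (Fin n) F)] at hj
    rw [Matrix.mul_apply] at hj ⊢
    rw [Matrix.mul_apply] at hj ⊢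
    exact hj.symm
  refine ⟨W, ↑W⁻¹, W.mul_inv, W.inv_mul, ?_, ?_⟩
  · have : A' = (W : Matrix (Fin n) (Fin n) F) * A * U * (↑U'⁻¹ : Matrix (Fin n) (Fin n) F) := by
      rw [hTA, Matrix.mul_assoc, U'.mul_inv, Matrix.mul_one]
    rw [this, hW, _root_.mul_inv_rev, inv_inv, Units.val_mul U, Matrix.mul_assoc _ U.val]
  · have h := key (X ^ 0)
    rwa [leftEval_X_pow, leftEval_X_pow, pow_zero, pow_zero, Matrix.one_mul, Matrix.one_mul] at h

end Helpers

/-- Proposition `C:4.5`(1): every nonzero right ideal of `F[z]` is the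
annihilating ideal of a controllable pair, and two controllable pairs determine the
same right ideal iff they are similar. -/
theorem statement6 {F : Type*} [DivisionRing F] (I : Set F[X])
    (h0 : (0 : F[X]) ∈ I)
    (hadd : ∀ f ∈ I, ∀ g ∈ I, f + g ∈ I)
    (hneg : ∀ f ∈ I, -f ∈ I)
    (hmulr : ∀ f ∈ I, ∀ g : F[X], f * g ∈ I)
    (hne : ∃ f ∈ I, f ≠ 0) :
    (∃ (n : ℕ) (A : Matrix (Fin n) (Fin n) F) (v : Matrix (Fin n) (Fin 1) F),
      IsUnit (ctrbMat A v) ∧ I = {f : F[X] | leftEval A v f = 0}) ∧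
    (∀ (n : ℕ) (A A' : Matrix (Fin n) (Fin n) F) (v v' : Matrix (Fin n) (Fin 1) F),
      IsUnit (ctrbMat A v) → IsUnit (ctrbMat A' v') →
      ({f : F[X] | leftEval A v f = 0} = {f : F[X] | leftEval A' v' f = 0} ↔
        ∃ T T' : Matrix (Fin n) (Fin n) F,
          T * T' = 1 ∧ T' * T = 1 ∧ A' = T * A * T' ∧ v' = T * v)) := by
  refine ⟨exists_controllable_pair I hadd hneg hmulr hne, fun n A A' v v' hc hc' =>
    ⟨similar_of_ker_eq hc hc', ?_⟩⟩
  rintro ⟨T, T', h1, h2, rfl, rfl⟩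
  ext f
  rw [Set.mem_ofPred_eq, Set.mem_ofPred_eq, leftEval_conj A T T' v h2 h1]
  constructor
  · intro h
    rw [h, Matrix.mul_zero]
  · intro h
    rw [← Matrix.one_mul (leftEval A v f), ← h2, Matrix.mul_assoc, h, Matrix.mul_zero]
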